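/- Let n ≥ 3, let q_n = ((−1)^{n+1} + 2ⁿ)/3, and define the utility vector m on [n+1] by m_i = 2^i for 1 ≤ i ≤ n−2, m_{n−1} = q_n, m_n = 2^{n−1}, m_{n+1} = 2ⁿ, with induced comparative probability order ≼_m on subsets of [n+1] (A ≼_m B ⇔ ∑_{i∈A} m_i ≤ ∑_{i∈B} m_i). Then for every flippable pair (A,B) of ≼_m, the order obtained from ≼_m by flipping over (A,B) (reversing exactly the comparisons between A∪D and B∪D for every D disjoint from A∪B) is a representable comparative probability order. -/

import Mathlib

open Finset

/-- The strict part of a (total antisymmetric) order on subsets. -/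
def cpLT {n : ℕ} (le : Finset (Fin n) → Finset (Fin n) → Prop)
    (A B : Finset (Fin n)) : Prop :=
  le A B ∧ A ≠ B

/-- `le` is a comparative probability order on `[n]`: a linear (total,
antisymmetric, transitive) order on the powerset of `[n]` with `∅ ≺ A` for
nonempty `A`, satisfying de Finetti's axiom. -/
def IsCPO {n : ℕ} (le : Finset (Fin n) → Finset (Fin n) → Prop) : Prop :=
  (∀ A B, le A B ∨ le B A) ∧
  (∀ A B, le A B → le B A → A = B) ∧
  (∀ A B C, le A B → le B C → le A C) ∧
  (∀ A : Finset (Fin n), A ≠ ∅ → cpLT le ∅ A) ∧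
  (∀ A B C : Finset (Fin n), Disjoint (A ∪ B) C → (le A B ↔ le (A ∪ C) (B ∪ C)))

/-- `(A,B)` is a critical pair: disjoint, `A ≺ B`, and no `C` with `A ≺ C ≺ B`. -/
def Critical {n : ℕ} (le : Finset (Fin n) → Finset (Fin n) → Prop)
    (A B : Finset (Fin n)) : Prop :=
  Disjoint A B ∧ cpLT le A B ∧ ¬ ∃ C, cpLT le A C ∧ cpLT le C B

/-- `(A,B)` is a flippable pair: critical, and for every `D` disjoint from
`A ∪ B` the pair `(A ∪ D, B ∪ D)` is adjacent. -/
def Flippable {n : ℕ} (le : Finset (Fin n) → Finset (Fin n) → Prop)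
    (A B : Finset (Fin n)) : Prop :=
  Critical le A B ∧
  ∀ D : Finset (Fin n), Disjoint D (A ∪ B) →
    ¬ ∃ C, cpLT le (A ∪ D) C ∧ cpLT le C (B ∪ D)

/-- The set of flippable pairs of an order. -/
def FlippablePairs {n : ℕ} (le : Finset (Fin n) → Finset (Fin n) → Prop) :
    Set (Finset (Fin n) × Finset (Fin n)) :=
  {p | Flippable le p.1 p.2}

/-- `le` is (additively) representable by a positive utility vector. -/
def Representable {n : ℕ} (le : Finset (Fin n) → Finset (Fin n) → Prop) : Prop :=
  ∃ u : Fin n → ℝ, (∀ i, 0 < u i) ∧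
    ∀ A B : Finset (Fin n), le A B ↔ ∑ i ∈ A, u i ≤ ∑ i ∈ B, u i

/-- `(X, Y) = (A ∪ D, B ∪ D)` for some `D` disjoint from `A ∪ B`. -/
def FlipRel {n : ℕ} (A B X Y : Finset (Fin n)) : Prop :=
  ∃ D : Finset (Fin n), Disjoint D (A ∪ B) ∧ X = A ∪ D ∧ Y = B ∪ D

/-- The relation obtained from `le` by flipping over the pair `(A,B)`:
all comparisons between `A ∪ D` and `B ∪ D` (for `D` disjoint from `A ∪ B`)
are reversed, all other comparisons are kept. -/
def flipOrder {n : ℕ} (le : Finset (Fin n) → Finset (Fin n) → Prop)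
    (A B : Finset (Fin n)) : Finset (Fin n) → Finset (Fin n) → Prop :=
  fun X Y => (le X Y ∧ ¬ FlipRel A B X Y) ∨ FlipRel A B Y X

/-- Utility (sum of weights) of a subset. -/
def usum {k : ℕ} (m : Fin k → ℕ) (A : Finset (Fin k)) : ℕ := ∑ i ∈ A, m i

/-- The order on subsets induced by a utility vector. -/
def uord {k : ℕ} (m : Fin k → ℕ) : Finset (Fin k) → Finset (Fin k) → Prop :=
  fun A B => usum m A ≤ usum m B

/-- `qn n = ((−1)^(n+1) + 2^n) / 3` as a natural number. -/
def qn (n : ℕ) : ℕ := if n % 2 = 1 then (2 ^ n + 1) / 3 else (2 ^ n - 1) / 3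

/-- The utility vector `m` on `[n+1]` (element `k` corresponds to index `k-1`):
`m_k = 2^k` for `1 ≤ k ≤ n−2`, `m_{n−1} = qn n`, `m_n = 2^(n−1)`, `m_{n+1} = 2^n`. -/
def mvec (n : ℕ) : Fin (n + 1) → ℕ := fun i =>
  if (i : ℕ) + 1 ≤ n - 2 then 2 ^ ((i : ℕ) + 1)
  else if (i : ℕ) + 1 = n - 1 then qn n
  else if (i : ℕ) + 1 = n then 2 ^ (n - 1)
  else 2 ^ n

/-!
Write `m(X)` for the utility of `X`.

For the vector `m` at hand the even sums fill an initial segment of the even numbers, and the odd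
ones an initial segment above the odd weight; this leaves no room for a flippable pair `(A, B)` with
`m(B) - m(A) ≥ 2`, so every flippable pair has `m(B) - m(A) = 1`.

Such a pair can be flipped in any order with distinct integral subset sums. Let `c = χ_B - χ_A` and
`V = |A| + |B| = c · c`. Then `c · (χ_Y - χ_X) ≤ V`, and equality together with `m(Y) - m(X) = 1`
forces `(X, Y) = (A ∪ D, B ∪ D)`. Hence `(2V - 1) m - 2c` represents the flipped order.
-/

section Order

variable {k : ℕ} {le : Finset (Fin k) → Finset (Fin k) → Prop} {A B X Y : Finset (Fin k)}

lemma Representable.isCPO (hrep : Representable le) (hanti : ∀ X Y, le X Y → le Y X → X = Y) :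
    IsCPO le := by
  obtain ⟨u, hu, hle⟩ := hrep
  refine ⟨fun X Y ↦ ?_, hanti, fun X Y Z ↦ ?_, fun X hX ↦ ⟨?_, hX.symm⟩, fun X Y C hC ↦ ?_⟩
  · simpa only [hle] using le_total _ _
  · simpa only [hle] using le_trans
  · simpa only [hle, sum_empty] using sum_nonneg fun i _ ↦ (hu i).le
  · rw [disjoint_union_left] at hC
    rw [hle, hle, sum_union hC.1, sum_union hC.2, add_le_add_iff_right]

lemma flipRel_iff : FlipRel A B X Y ↔ A ⊆ X ∧ B ⊆ Y ∧ X \ A = Y \ B := by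
  constructor
  · rintro ⟨D, hD, rfl, rfl⟩
    rw [disjoint_union_right] at hD
    refine ⟨subset_union_left, subset_union_left, ?_⟩
    rw [union_sdiff_cancel_left hD.1.symm, union_sdiff_cancel_left hD.2.symm]
  · rintro ⟨hA, hB, h⟩
    refine ⟨X \ A, ?_, (union_sdiff_of_subset hA).symm, ?_⟩
    · exact disjoint_union_right.2 ⟨sdiff_disjoint, h ▸ sdiff_disjoint⟩
    · rw [h, union_sdiff_of_subset hB]

end Order

section Utility

variable {k : ℕ} {m : Fin k → ℕ} {A B X Y : Finset (Fin k)}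

lemma usum_union (h : Disjoint X Y) : usum m (X ∪ Y) = usum m X + usum m Y :=
  sum_union h

lemma usum_sdiff_add (h : A ⊆ X) : usum m (X \ A) + usum m A = usum m X :=
  sum_sdiff h

lemma cpLT_uord_of_usum_lt (h : usum m X < usum m Y) : cpLT (uord m) X Y :=
  ⟨h.le, fun hXY ↦ h.ne (congrArg (usum m) hXY)⟩

lemma cpLT.usum_lt (hm : Function.Injective (usum m)) (h : cpLT (uord m) X Y) :
    usum m X < usum m Y :=
  lt_of_le_of_ne h.1 (hm.ne h.2)

lemma nonempty_of_usum_eq_succ (hm : ∀ i, 1 < m i) (hAB : usum m B = usum m A + 1) :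
    A.Nonempty := by
  rw [nonempty_iff_ne_empty]
  rintro rfl
  have hB : usum m B = 1 := hAB
  obtain ⟨i, hi⟩ : B.Nonempty := nonempty_of_sum_ne_zero (hB.trans_ne one_ne_zero)
  exact (hm i).not_ge (hB ▸ single_le_sum_of_canonicallyOrdered hi)

lemma FlipRel.usum_add (h : FlipRel A B X Y) :
    usum m X + usum m B = usum m Y + usum m A := by
  obtain ⟨hA, hB, hD⟩ := flipRel_iff.1 h
  have hX := usum_sdiff_add (m := m) hA
  have hY := usum_sdiff_add (m := m) hB
  rw [hD] at hX
  omega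

lemma flipRel_of_usum_add (hm : Function.Injective (usum m)) (hA : A ⊆ X) (hB : B ⊆ Y)
    (h : usum m X + usum m B = usum m Y + usum m A) : FlipRel A B X Y := by
  refine flipRel_iff.2 ⟨hA, hB, hm ?_⟩
  have hX := usum_sdiff_add (m := m) hA
  have hY := usum_sdiff_add (m := m) hB
  omega

lemma not_flipRel_of_usum_le (hAB : usum m A < usum m B) (h : usum m Y ≤ usum m X) :
    ¬ FlipRel A B X Y := by
  intro hf
  have := hf.usum_add (m := m)
  omega

lemma flipOrder_uord_antisymm (hm : Function.Injective (usum m)) (hAB : usum m A < usum m B)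
    (hXY : flipOrder (uord m) A B X Y) (hYX : flipOrder (uord m) A B Y X) : X = Y := by
  rcases hXY with ⟨hle, hnot⟩ | hflip
  · rcases hYX with ⟨hge, -⟩ | hflip'
    · exact hm (le_antisymm hle hge)
    · exact absurd hflip' hnot
  · rcases hYX with ⟨-, hnot'⟩ | hflip'
    · exact absurd hflip hnot'
    · have := hflip.usum_add (m := m)
      have := hflip'.usum_add (m := m)
      omega

lemma flipOrder_uord_iff_of_lt {α : Type*} [LinearOrder α] {w : Finset (Fin k) → α}
    (hm : Function.Injective (usum m)) (hAB : usum m A < usum m B)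
    (hflip : ∀ X Y, FlipRel A B X Y → w Y < w X)
    (hkeep : ∀ X Y, usum m X < usum m Y → ¬ FlipRel A B X Y → w X < w Y) :
    flipOrder (uord m) A B X Y ↔ w X ≤ w Y := by
  rcases lt_trichotomy (usum m X) (usum m Y) with hlt | heq | hgt
  · have hYX : ¬ FlipRel A B Y X := not_flipRel_of_usum_le hAB hlt.le
    by_cases hXY : FlipRel A B X Y
    · simp only [flipOrder, hXY, hYX, not_true_eq_false, and_false, or_false, false_iff, not_le,
        hflip X Y hXY]
    · simp only [flipOrder, hXY, hYX, uord, hlt.le, not_false_eq_true, and_true, or_false,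
        (hkeep X Y hlt hXY).le]
  · obtain rfl := hm heq
    simp only [flipOrder, uord, le_refl, not_flipRel_of_usum_le hAB le_rfl, not_false_eq_true,
      and_true, or_false]
  · by_cases hYX : FlipRel A B Y X
    · simp only [flipOrder, hYX, or_true, (hflip Y X hYX).le]
    · simp only [flipOrder, uord, hgt.not_ge, false_and, hYX, or_false, false_iff, not_le,
        hkeep Y X hgt hYX]

end Utility

section UnitGap

variable {k : ℕ} {m : Fin k → ℕ} {A B X Y : Finset (Fin k)}

/-- The pairing of the signed indicator vector `χ_B - χ_A` of the pair `(A, B)` with the indicator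
vector of `X`. -/
def signedCount (A B X : Finset (Fin k)) : ℤ := #(X ∩ B) - #(X ∩ A)

/-- The utility vector `(2V - 1) m - 2 (χ_B - χ_A)` with `V = |A| + |B|`, which represents the flip
of `uord m` over a pair `(A, B)` whose utilities differ by one. -/
def flipUtility (m : Fin k → ℕ) (A B : Finset (Fin k)) (i : Fin k) : ℤ :=
  (2 * (#A + #B) - 1) * m i - 2 * ((if i ∈ B then 1 else 0) - if i ∈ A then 1 else 0)

lemma sum_flipUtility (m : Fin k → ℕ) (A B X : Finset (Fin k)) :
    ∑ i ∈ X, flipUtility m A B i =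
      (2 * (#A + #B) - 1) * (usum m X : ℤ) - 2 * signedCount A B X := by
  simp only [flipUtility, signedCount, usum, sum_sub_distrib, ← mul_sum, sum_ite_mem,
    sum_const, nsmul_eq_mul, mul_one, Nat.cast_sum]

lemma signedCount_sub_le (A B X Y : Finset (Fin k)) :
    signedCount A B Y - signedCount A B X ≤ #A + #B := by
  have hXA : #(X ∩ A) ≤ #A := card_le_card inter_subset_right
  have hYB : #(Y ∩ B) ≤ #B := card_le_card inter_subset_right
  unfold signedCount
  omega

lemma subset_of_signedCount_sub_eq (h : signedCount A B Y - signedCount A B X = #A + #B) :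
    A ⊆ X ∧ B ⊆ Y := by
  have hXA : #(X ∩ A) ≤ #A := card_le_card inter_subset_right
  have hYB : #(Y ∩ B) ≤ #B := card_le_card inter_subset_right
  unfold signedCount at h
  constructor
  · exact inter_eq_right.1 (eq_of_subset_of_card_le inter_subset_right (by omega))
  · exact inter_eq_right.1 (eq_of_subset_of_card_le inter_subset_right (by omega))

lemma FlipRel.signedCount_sub (hd : Disjoint A B) (h : FlipRel A B X Y) :
    signedCount A B Y - signedCount A B X = #A + #B := by
  obtain ⟨D, hD, rfl, rfl⟩ := h
  rw [disjoint_union_right] at hD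
  simp only [signedCount, union_inter_distrib_right, inter_self,
    disjoint_iff_inter_eq_empty.1 hD.1, disjoint_iff_inter_eq_empty.1 hD.2,
    disjoint_iff_inter_eq_empty.1 hd, disjoint_iff_inter_eq_empty.1 hd.symm, union_empty,
    card_empty]
  omega

lemma FlipRel.sum_flipUtility_lt (hd : Disjoint A B) (hAB : usum m B = usum m A + 1)
    (h : FlipRel A B X Y) : ∑ i ∈ Y, flipUtility m A B i < ∑ i ∈ X, flipUtility m A B i := by
  have hG := h.signedCount_sub hd
  have hY : usum m Y = usum m X + 1 := by
    have := h.usum_add (m := m)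
    omega
  rw [sum_flipUtility, sum_flipUtility, hY]
  push_cast
  linarith

lemma sum_flipUtility_lt_of_not_flipRel (hm : Function.Injective (usum m)) (hA : A.Nonempty)
    (hAB : usum m B = usum m A + 1) (hXY : usum m X < usum m Y) (hnot : ¬ FlipRel A B X Y) :
    ∑ i ∈ X, flipUtility m A B i < ∑ i ∈ Y, flipUtility m A B i := by
  have hG := signedCount_sub_le A B X Y
  rw [sum_flipUtility, sum_flipUtility]
  rcases (Nat.succ_le_of_lt hXY).eq_or_lt with hone | htwo
  · have hne : signedCount A B Y - signedCount A B X ≠ #A + #B := fun h ↦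
      have ⟨hAX, hBY⟩ := subset_of_signedCount_sub_eq h
      hnot (flipRel_of_usum_add hm hAX hBY (by omega))
    have hG' := lt_of_le_of_ne hG hne
    rw [← hone]
    push_cast
    linarith
  · have hA1 : 1 ≤ #A := hA.card_pos
    have hB1 : 1 ≤ #B := by
      refine card_pos.2 (nonempty_iff_ne_empty.2 ?_)
      rintro rfl
      simp [usum] at hAB
    have hV : (2 : ℤ) ≤ #A + #B := by omega
    have hgap : (2 * (#A + #B) - 1) * 2 ≤ (2 * (#A + #B) - 1) * ((usum m Y : ℤ) - usum m X) :=
      mul_le_mul_of_nonneg_left (by omega) (by omega)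
    linarith

lemma flipOrder_uord_iff (hm : Function.Injective (usum m)) (hd : Disjoint A B)
    (hA : A.Nonempty) (hAB : usum m B = usum m A + 1) :
    flipOrder (uord m) A B X Y ↔
      ∑ i ∈ X, flipUtility m A B i ≤ ∑ i ∈ Y, flipUtility m A B i :=
  flipOrder_uord_iff_of_lt (w := fun Z ↦ ∑ i ∈ Z, flipUtility m A B i) hm (by omega)
    (fun _ _ ↦ FlipRel.sum_flipUtility_lt hd hAB)
    (fun _ _ ↦ sum_flipUtility_lt_of_not_flipRel hm hA hAB)

lemma flipUtility_pos (hm : Function.Injective (usum m)) (hA : A.Nonempty)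
    (hAB : usum m B = usum m A + 1) (i : Fin k) : 0 < flipUtility m A B i := by
  have hlt : usum m ∅ < usum m {i} := by
    have hne : usum m ∅ ≠ usum m {i} := hm.ne (singleton_ne_empty i).symm
    rw [usum, sum_empty] at hne ⊢
    exact Nat.pos_of_ne_zero hne.symm
  have hnot : ¬ FlipRel A B ∅ {i} := fun h ↦
    hA.ne_empty (subset_empty.1 (flipRel_iff.1 h).1)
  simpa only [sum_empty, sum_singleton] using
    sum_flipUtility_lt_of_not_flipRel hm hA hAB hlt hnot

theorem representable_flipOrder_uord (hm : Function.Injective (usum m)) (hd : Disjoint A B)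
    (hA : A.Nonempty) (hAB : usum m B = usum m A + 1) :
    Representable (flipOrder (uord m) A B) := by
  refine ⟨fun i ↦ flipUtility m A B i, fun i ↦ ?_, fun X Y ↦ ?_⟩
  · exact Int.cast_pos.2 (flipUtility_pos hm hA hAB i)
  · rw [flipOrder_uord_iff hm hd hA hAB]
    simp only [← Int.cast_sum, Int.cast_le]

theorem isCPO_flipOrder_uord (hm : Function.Injective (usum m)) (hd : Disjoint A B)
    (hA : A.Nonempty) (hAB : usum m B = usum m A + 1) :
    IsCPO (flipOrder (uord m) A B) :=
  (representable_flipOrder_uord hm hd hA hAB).isCPO fun _ _ ↦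
    flipOrder_uord_antisymm hm (by omega)

end UnitGap

section BinarySums

variable {n : ℕ}

lemma sum_two_pow_map_val (s : Finset (Fin n)) :
    ∑ i ∈ s.map Fin.valEmbedding, 2 ^ i = ∑ i ∈ s, 2 ^ (i : ℕ) :=
  sum_map _ _ _

lemma sum_two_pow_fin_injective :
    Function.Injective fun s : Finset (Fin n) ↦ ∑ i ∈ s, 2 ^ (i : ℕ) := by
  intro s t h
  refine map_injective Fin.valEmbedding (geomSum_injective le_rfl ?_)
  simpa only [sum_two_pow_map_val] using h

lemma exists_sum_two_pow_fin_eq {x : ℕ} (hx : x < 2 ^ n) :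
    ∃ s : Finset (Fin n), ∑ i ∈ s, 2 ^ (i : ℕ) = x := by
  have hlt : ∀ i ∈ x.bitIndices.toFinset, i < n := fun i hi ↦
    (Nat.pow_lt_pow_iff_right one_lt_two).1 <|
      (Nat.two_pow_le_of_mem_bitIndices (List.mem_toFinset.1 hi)).trans_lt hx
  refine ⟨x.bitIndices.toFinset.attachFin hlt, ?_⟩
  rw [← sum_two_pow_map_val, map_valEmbedding_attachFin, sum_toFinset_bitIndices_two_pow]

lemma sum_two_pow_fin_univ : ∑ i : Fin n, 2 ^ (i : ℕ) = 2 ^ n - 1 := by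
  rw [Fin.sum_univ_eq_sum_range fun i ↦ 2 ^ i, Nat.geomSum_eq le_rfl, Nat.div_one]

end BinarySums

section OddAmongPowers

variable {n : ℕ} {p : Fin (n + 1)} {m : Fin (n + 1) → ℕ} {A B X Y : Finset (Fin (n + 1))}

/-- The utility vectors generalizing `mvec n`: an odd weight at position `p`, and the weights
`2, 4, …, 2 ^ n`, in this order, at the remaining positions. -/
structure OddAmongPowers (p : Fin (n + 1)) (m : Fin (n + 1) → ℕ) : Prop where
  odd : Odd (m p)
  apply_succAbove (i : Fin n) : m (p.succAbove i) = 2 ^ ((i : ℕ) + 1)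

/-- Half of the total weight of `X` away from `p`, for a utility vector with
`OddAmongPowers p m`. -/
def binaryPart (p : Fin (n + 1)) (X : Finset (Fin (n + 1))) : ℕ :=
  ∑ i with p.succAbove i ∈ X, 2 ^ (i : ℕ)

lemma eq_of_binaryPart_eq (hp : p ∈ X ↔ p ∈ Y) (h : binaryPart p X = binaryPart p Y) : X = Y := by
  have hfilter := sum_two_pow_fin_injective h
  ext j
  rcases Fin.eq_self_or_eq_succAbove p j with rfl | ⟨i, rfl⟩
  · exact hp
  · simpa using Finset.ext_iff.1 hfilter i

lemma binaryPart_insert (p : Fin (n + 1)) (X : Finset (Fin (n + 1))) :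
    binaryPart p (insert p X) = binaryPart p X := by
  simp only [binaryPart, mem_insert, Fin.succAbove_ne, false_or]

lemma exists_binaryPart_eq (p : Fin (n + 1)) {x : ℕ} (hx : x < 2 ^ n) :
    ∃ X, p ∉ X ∧ binaryPart p X = x := by
  obtain ⟨s, rfl⟩ := exists_sum_two_pow_fin_eq hx
  refine ⟨s.map p.succAboveEmb, by simp [Fin.succAbove_ne], ?_⟩
  simp [binaryPart]

namespace OddAmongPowers

lemma usum_eq (hm : OddAmongPowers p m) (X : Finset (Fin (n + 1))) :
    usum m X = (if p ∈ X then m p else 0) + 2 * binaryPart p X := by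
  calc usum m X = ∑ j, if j ∈ X then m j else 0 := by rw [sum_ite_mem, univ_inter, usum]
    _ = (if p ∈ X then m p else 0) + ∑ i, if p.succAbove i ∈ X then 2 ^ ((i : ℕ) + 1) else 0 := by
      simp only [Fin.sum_univ_succAbove _ p, hm.apply_succAbove]
    _ = (if p ∈ X then m p else 0) + 2 * binaryPart p X := by
      simp only [binaryPart, mul_sum, sum_filter, pow_succ', mul_ite, mul_zero]

lemma odd_usum_iff (hm : OddAmongPowers p m) : Odd (usum m X) ↔ p ∈ X := by
  have heven : Even (2 * binaryPart p X) := even_two_mul _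
  rw [hm.usum_eq X, Nat.odd_add, iff_true_right heven]
  split_ifs with hp <;> simp [hp, hm.odd]

lemma usum_injective (hm : OddAmongPowers p m) : Function.Injective (usum m) := by
  intro X Y h
  have hp : p ∈ X ↔ p ∈ Y := by rw [← hm.odd_usum_iff, ← hm.odd_usum_iff, h]
  refine eq_of_binaryPart_eq hp ?_
  simpa [hm.usum_eq, hp] using h

lemma usum_univ (hm : OddAmongPowers p m) : usum m univ = m p + 2 * (2 ^ n - 1) := by
  simp [hm.usum_eq, binaryPart, sum_two_pow_fin_univ]

lemma exists_usum_eq (hm : OddAmongPowers p m) {x : ℕ} (hx : x < 2 * 2 ^ n)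
    (hodd : Odd x → m p ≤ x) : ∃ X, usum m X = x := by
  rcases x.even_or_odd' with ⟨y, rfl | rfl⟩
  · obtain ⟨X, hp, rfl⟩ := exists_binaryPart_eq p (x := y) (by omega)
    exact ⟨X, by simp [hm.usum_eq, hp]⟩
  · obtain ⟨r, hr⟩ := hm.odd
    have hle := hodd (odd_two_mul_add_one y)
    obtain ⟨X, -, hX⟩ := exists_binaryPart_eq p (x := y - r) (by omega)
    refine ⟨insert p X, ?_⟩
    rw [hm.usum_eq, if_pos (mem_insert_self p X), binaryPart_insert, hX]
    omega

lemma usum_eq_succ_of_critical (hm : OddAmongPowers p m) (hlt : m p < 2 ^ n)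
    (hcrit : Critical (uord m) A B) (hp : p ∈ A ∪ B) : usum m B = usum m A + 1 := by
  have hAB : usum m A < usum m B := hcrit.2.1.usum_lt hm.usum_injective
  by_contra hne
  have hsum : usum m A + usum m B ≤ m p + 2 * (2 ^ n - 1) := by
    rw [← usum_union hcrit.1, ← hm.usum_univ]
    exact sum_le_sum_of_subset (subset_univ _)
  have hparity : ¬ (Odd (usum m A) ↔ Odd (usum m B)) := by
    rw [hm.odd_usum_iff, hm.odd_usum_iff]
    have hnot : p ∈ A → p ∉ B := fun h ↦ disjoint_left.1 hcrit.1 h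
    rw [mem_union] at hp
    tauto
  have hpos := hm.odd.pos
  obtain ⟨x, heven, hAx, hxB, hx⟩ :
      ∃ x, Even x ∧ usum m A < x ∧ x < usum m B ∧ x < 2 * 2 ^ n := by
    rcases Nat.even_or_odd (usum m A) with hA | hA
    · have hB : Odd (usum m B) := by
        by_contra hB
        exact hparity (iff_of_false (Nat.not_odd_iff_even.2 hA) hB)
      refine ⟨usum m A + 2, hA.add even_two, ?_⟩
      rw [Nat.even_iff] at hA
      rw [Nat.odd_iff] at hB
      omega
    · exact ⟨usum m A + 1, hA.add_one, by omega⟩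
  obtain ⟨X, rfl⟩ := hm.exists_usum_eq hx fun hodd ↦ absurd heven (Nat.not_even_iff_odd.2 hodd)
  exact hcrit.2.2 ⟨X, cpLT_uord_of_usum_lt hAx, cpLT_uord_of_usum_lt hxB⟩

lemma odd_mem_of_flippable (hm : OddAmongPowers p m) (hlt : m p < 2 ^ n)
    (hf : Flippable (uord m) A B) : p ∈ A ∪ B := by
  by_contra hp
  obtain ⟨⟨hd, hle, -⟩, hD⟩ := hf
  have hAB : usum m A < usum m B := hle.usum_lt hm.usum_injective
  have heven : ∀ X ⊆ A ∪ B, usum m X % 2 = 0 := fun X hX ↦ by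
    rw [← Nat.even_iff, ← Nat.not_odd_iff_even, hm.odd_usum_iff]
    exact fun h ↦ hp (hX h)
  have hA := heven A subset_union_left
  have hB := heven B subset_union_right
  -- Adding everything else of even weight pushes the odd number just below `B ∪ D` above `m p`.
  set D := (A ∪ B)ᶜ.erase p
  have hDdisj : Disjoint D (A ∪ B) :=
    disjoint_compl_left.mono_left (erase_subset _ _)
  have hsum : usum m A + usum m B + usum m D = 2 * (2 ^ n - 1) := by
    have hcompl : usum m (A ∪ B) + usum m (A ∪ B)ᶜ = usum m univ := sum_add_sum_compl _ _
    have herase : m p + usum m D = usum m (A ∪ B)ᶜ := add_sum_erase _ _ (mem_compl.2 hp)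
    rw [usum_union hd, hm.usum_univ] at hcompl
    omega
  obtain ⟨hDA, hDB⟩ := disjoint_union_right.1 hDdisj
  have hAD := usum_union (m := m) hDA.symm
  have hBD := usum_union (m := m) hDB.symm
  obtain ⟨X, hX⟩ := hm.exists_usum_eq (x := usum m B + usum m D - 1) (by omega) (by omega)
  exact hD D hDdisj ⟨X, cpLT_uord_of_usum_lt (by omega), cpLT_uord_of_usum_lt (by omega)⟩

lemma usum_eq_succ_of_flippable (hm : OddAmongPowers p m) (hlt : m p < 2 ^ n)
    (hf : Flippable (uord m) A B) : usum m B = usum m A + 1 :=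
  hm.usum_eq_succ_of_critical hlt hf.1 (hm.odd_mem_of_flippable hlt hf)

lemma one_lt_apply (hm : OddAmongPowers p m) (hone : 1 < m p) (j : Fin (n + 1)) : 1 < m j := by
  rcases Fin.eq_self_or_eq_succAbove p j with rfl | ⟨i, rfl⟩
  · exact hone
  · rw [hm.apply_succAbove]
    exact Nat.one_lt_two_pow i.val.succ_ne_zero

end OddAmongPowers

theorem stmt5_general (hm : OddAmongPowers p m) (hone : 1 < m p) (hlt : m p < 2 ^ n)
    (hf : Flippable (uord m) A B) :
    IsCPO (flipOrder (uord m) A B) ∧ Representable (flipOrder (uord m) A B) := by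
  have hAB := hm.usum_eq_succ_of_flippable hlt hf
  have hA : A.Nonempty := nonempty_of_usum_eq_succ (hm.one_lt_apply hone) hAB
  exact ⟨isCPO_flipOrder_uord hm.usum_injective hf.1.1 hA hAB,
    representable_flipOrder_uord hm.usum_injective hf.1.1 hA hAB⟩

end OddAmongPowers

section Mvec

variable {n : ℕ}

lemma three_mul_qn (n : ℕ) : 3 * qn n + 1 = 2 ^ n + 2 * (n % 2) := by
  have hmod : 2 ^ n % 3 = 1 + n % 2 := by
    induction n with
    | zero => rfl
    | succ n ih => rcases Nat.mod_two_eq_zero_or_one n <;> omega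
  have hpow := Nat.two_pow_pos n
  unfold qn
  split_ifs <;> omega

lemma odd_qn (hn : 1 ≤ n) : Odd (qn n) := by
  have hq := three_mul_qn n
  have heven : Even (2 ^ n) := even_two.pow_of_ne_zero (by omega)
  rw [Nat.even_iff] at heven
  rw [Nat.odd_iff]
  omega

lemma one_lt_qn (hn : 3 ≤ n) : 1 < qn n := by
  have hq := three_mul_qn n
  have hpow : 2 ^ 3 ≤ 2 ^ n := Nat.pow_le_pow_right two_pos hn
  omega

lemma qn_lt_two_pow (n : ℕ) : qn n < 2 ^ n := by
  have hq := three_mul_qn n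
  have hpow : 0 < 2 ^ n := by positivity
  omega

lemma mvec_eq_qn (hn : 2 ≤ n) : mvec n ⟨n - 2, by omega⟩ = qn n := by
  unfold mvec
  rw [if_neg (by grind), if_pos (by grind)]

lemma oddAmongPowers_mvec (hn : 2 ≤ n) : OddAmongPowers ⟨n - 2, by omega⟩ (mvec n) where
  odd := mvec_eq_qn hn ▸ odd_qn (by omega)
  apply_succAbove i := by
    simp only [mvec, Fin.succAbove, Fin.lt_def, Fin.val_castSucc]
    split_ifs <;> simp_all <;> omega

end Mvec

/-- For `n ≥ 3`, flipping the order `≼_{mvec n}` over any of its flippable pairs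
yields a representable comparative probability order. -/
theorem stmt5 {n : ℕ} (hn : 3 ≤ n) (A B : Finset (Fin (n + 1)))
    (hf : Flippable (uord (mvec n)) A B) :
    IsCPO (flipOrder (uord (mvec n)) A B) ∧
    Representable (flipOrder (uord (mvec n)) A B) := by
  have hq := mvec_eq_qn (n := n) (by omega)
  exact stmt5_general (oddAmongPowers_mvec (by omega)) (hq ▸ one_lt_qn hn) (hq ▸ qn_lt_two_pow n) hf
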